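/- Let G = G' × ℤ/n where G' is a nontrivial finite nilpotent group of odd order with no cyclic Sylow subgroup and gcd(n, |G'|) = 1. For every element x of G whose G'-component is nontrivial, the number of distinct cyclic subgroups of G of order o(x) is at least 3. -/

import Mathlib

lemma aux_pow {G : Type*} [Group G] {a b z : G} (ha : Commute z a) (hb : Commute z b)
    (h : b * a = a * b * z) (n : ℕ) : (a * b) ^ n = a ^ n * b ^ n * z ^ (n * (n - 1) / 2) := by
  have h2 : ∀ n : ℕ, b ^ n * a = a * b ^ n * z ^ n := by
    intro n
    induction n with
    | zero => simp
    | succ k ih =>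
      calc b ^ (k+1) * a = b ^ k * (b * a) := by group
        _ = (b ^ k * a) * (b * z) := by rw [h]; group
        _ = a * b ^ k * (z ^ k * b) * z := by rw [ih]; group
        _ = a * b ^ k * (b * z ^ k) * z := by rw [(hb.pow_left k).eq]
        _ = _ := by group
  induction n with
  | zero => simp
  | succ k ih =>
    have e : (k + 1) * (k + 1 - 1) / 2 = k * (k - 1) / 2 + k := by
      rw [← Nat.choose_two_right, ← Nat.choose_two_right, Nat.choose_succ_succ' k 1]; simp; omega
    have hab : Commute (z ^ (k * (k - 1) / 2)) (a * b) := ((ha.mul_right hb).pow_left _)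
    rw [pow_succ, ih, mul_assoc, hab.eq, e]
    calc a ^ k * b ^ k * (a * b * z ^ (k * (k - 1) / 2))
        = a ^ k * (b ^ k * a) * b * z ^ (k * (k - 1) / 2) := by group
      _ = a ^ k * (a * b ^ k) * (z ^ k * b) * z ^ (k * (k - 1) / 2) := by rw [h2]; group
      _ = a ^ k * (a * b ^ k) * (b * z ^ k) * z ^ (k * (k - 1) / 2) := by rw [(hb.pow_left k).eq]
      _ = _ := by rw [pow_add, ← pow_mul_comm]; group

lemma aux_powp {G : Type*} [Group G] {a b z : G} (ha : Commute z a) (hb : Commute z b)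
    (h : b * a = a * b * z) (p : ℕ) (hp : Odd p) (hz : z ^ p = 1) :
    (a * b) ^ p = a ^ p * b ^ p := by
  rw [aux_pow ha hb h]
  obtain ⟨k, rfl⟩ := hp
  have : (2 * k + 1) * (2 * k + 1 - 1) / 2 = (2 * k + 1) * k := by
    rw [Nat.add_sub_cancel, mul_comm 2 k, ← mul_assoc, Nat.mul_div_cancel _ (by norm_num)]
  rw [this, pow_mul, hz]; simp
  
lemma aux_order {G : Type*} [Group G] [Finite G] {p : ℕ} (hp : p.Prime) {x e : G}
    (hpx : p ∣ orderOf x) (he : e ∉ Subgroup.zpowers x) (h : (x * e) ^ p = x ^ p) :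
    orderOf (x * e) = orderOf x := by
  by_cases hd : p ∣ orderOf (x * e)
  · have h1 := orderOf_pow_of_dvd hp.ne_zero hd
    have h2 := orderOf_pow_of_dvd hp.ne_zero hpx
    rw [h, h2] at h1
    exact ((Nat.div_left_inj hpx hd).1 h1).symm
  · exfalso
    apply he
    have hc : (orderOf (x * e)).Coprime p := ((Nat.Prime.coprime_iff_not_dvd hp).2 hd).symm
    obtain ⟨m, hm⟩ := exists_pow_eq_self_of_coprime hc.symm
    rw [h] at hm
    have : e = x⁻¹ * (x * e) := by group
    rw [this, ← hm]
    exact mul_mem (inv_mem (Subgroup.mem_zpowers x))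
      (pow_mem (pow_mem (Subgroup.mem_zpowers x) _) _)

lemma aux_three {G : Type*} [Group G] [Finite G] {p : ℕ} (hp : p.Prime) (hodd : Odd p) {x e z : G}
    (hpx : p ∣ orderOf x) (he : e ∉ Subgroup.zpowers x) (hep : e ^ p = 1) (hz : z ^ p = 1)
    (hzx : Commute z x) (hze : Commute z e) (h : e * x = x * e * z) :
    3 ≤ Set.ncard {H : Subgroup G | ∃ g : G, orderOf g = orderOf x ∧ H = Subgroup.zpowers g} := by
  have h1 : orderOf (x * e) = orderOf x := by
    apply aux_order hp hpx he
    rw [aux_powp hzx hze h p hodd hz, hep, mul_one]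
  have he2 : e ^ 2 ∉ Subgroup.zpowers x := by
    intro hh
    obtain ⟨k, hk⟩ := hodd
    apply he
    have : e = (e ^ 2)⁻¹ ^ k := by
      have : e ^ (2 * k) * e = 1 := by rw [← pow_succ, ← hk, hep]
      rw [inv_pow, ← pow_mul]; exact eq_inv_of_mul_eq_one_right this
    rw [this]
    exact pow_mem (inv_mem hh) _
  have h2 : orderOf (x * e ^ 2) = orderOf x := by
    apply aux_order hp hpx he2
    have hh : e ^ 2 * x = x * e ^ 2 * z ^ 2 := by
      calc e ^ 2 * x = e * (e * x) := by simp only [pow_two, mul_assoc]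
        _ = (e * x) * (e * z) := by conv_lhs => rw [h]
                                    simp only [mul_assoc]
        _ = x * e * (z * e) * z := by rw [h]; group
        _ = _ := by rw [hze.eq]; simp only [pow_two, mul_assoc]
    rw [aux_powp (hzx.pow_left 2) (hze.pow_pow 2 2) hh p hodd (by rw [← pow_mul, mul_comm, pow_mul, hz, one_pow]),
      ← pow_mul, mul_comm 2 p, pow_mul, hep, one_pow, mul_one]
  have key : ∀ f, x * f ∈ Subgroup.zpowers x → f ∈ Subgroup.zpowers x := fun f hf =>
    (Subgroup.mul_mem_cancel_left _ (Subgroup.mem_zpowers x)).1 hf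
  have n1 : Subgroup.zpowers x ≠ Subgroup.zpowers (x * e) := fun hh =>
    he (key _ (hh ▸ Subgroup.mem_zpowers _))
  have n2 : Subgroup.zpowers x ≠ Subgroup.zpowers (x * e ^ 2) := fun hh =>
    he2 (key _ (hh ▸ Subgroup.mem_zpowers _))
  have n3 : Subgroup.zpowers (x * e) ≠ Subgroup.zpowers (x * e ^ 2) := by
    intro hh
    have m1 : x * e ∈ Subgroup.zpowers (x * e) := Subgroup.mem_zpowers _
    have m2 : x * e * e ∈ Subgroup.zpowers (x * e) := by
      rw [hh, mul_assoc, ← pow_two]; exact Subgroup.mem_zpowers _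
    have m3 := (Subgroup.mul_mem_cancel_left _ m1).1 m2
    have m4 : x ∈ Subgroup.zpowers (x * e) := (Subgroup.mul_mem_cancel_right _ m3).1 m1
    apply n1
    apply Subgroup.eq_of_le_of_card_ge (by simpa using m4)
    rw [Nat.card_zpowers, Nat.card_zpowers, h1]
  have : Set.ncard {Subgroup.zpowers x, Subgroup.zpowers (x * e), Subgroup.zpowers (x * e ^ 2)} = 3 :=
    Set.ncard_eq_three.2 ⟨_, _, _, n1, n2, n3, rfl⟩
  rw [← this]
  apply Set.ncard_le_ncard _ (Set.toFinite _)
  rintro H (rfl | rfl | rfl)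
  · exact ⟨x, rfl, rfl⟩
  · exact ⟨_, h1, rfl⟩
  · exact ⟨_, h2, rfl⟩

universe u in
lemma aux_pgroup (p : ℕ) [hp : Fact p.Prime] (hodd : Odd p) : ∀ (n : ℕ) (P : Type u) [Group P] [Finite P],
    Nat.card P = n → IsPGroup p P → ¬ IsCyclic P →
    ∃ z e : P, z ∈ Subgroup.center P ∧ orderOf z = p ∧ e ^ p = 1 ∧ e ∉ Subgroup.zpowers z ∧
      ∀ g : P, ∃ w ∈ Subgroup.zpowers z, g * e = e * g * w := by
  intro n
  induction n using Nat.strong_induction_on with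
  | _ n ih =>
  intro P _ _ hn hP hcyc
  have hnt : Nontrivial P := by
    by_contra h
    rw [not_nontrivial_iff_subsingleton] at h
    exact hcyc inferInstance
  have hcnt := hP.center_nontrivial
  obtain ⟨z, hz, hzc⟩ : ∃ z : P, orderOf z = p ∧ z ∈ Subgroup.center P := by
    have hd : p ∣ Nat.card (Subgroup.center P) := by
      obtain ⟨k, hk0, hk⟩ := ((hP.to_subgroup (Subgroup.center P)).nontrivial_iff_card).1 hcnt
      rw [hk]; exact dvd_pow_self p hk0.ne'
    obtain ⟨y, hy⟩ := exists_prime_orderOf_dvd_card' p hd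
    exact ⟨y, by rw [Subgroup.orderOf_coe]; exact hy, y.2⟩
  have hNc : Subgroup.zpowers z ≤ Subgroup.center P := by simpa using hzc
  have hcen : ∀ c ∈ Subgroup.zpowers z, ∀ g, Commute c g := fun c hc g =>
    (Subgroup.mem_center_iff.1 (hNc hc) g).symm
  have hNp : ∀ c ∈ Subgroup.zpowers z, c ^ p = 1 := by
    rintro c ⟨k, rfl⟩
    change (z ^ k) ^ p = 1
    rw [← zpow_natCast, ← zpow_mul, mul_comm, zpow_mul, zpow_natCast, ← hz, pow_orderOf_eq_one, one_zpow]
  have hNgen : ∀ c ∈ Subgroup.zpowers z, c ≠ 1 → Subgroup.zpowers c = Subgroup.zpowers z := by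
    intro c hc hc1
    apply Subgroup.eq_of_le_of_card_ge (by simpa using hc)
    rw [Nat.card_zpowers, Nat.card_zpowers, hz, orderOf_eq_prime (hNp c hc) hc1]
  have hNn : (Subgroup.zpowers z).Normal := ⟨fun c hc g => by
    rw [← (hcen c hc g).eq]; simpa using hc⟩
  set N := Subgroup.zpowers z with hN
  set π := QuotientGroup.mk' N with hπ
  have hker : ∀ a, π a = 1 ↔ a ∈ N := fun a => QuotientGroup.eq_one_iff a
  have hu : ∀ a b, Commute (π a) (π b) → ∃ c ∈ N, a * b = b * a * c := by
    intro a b hab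
    refine ⟨(b * a)⁻¹ * (a * b), ?_, by group⟩
    rw [← hker, map_mul, map_inv, map_mul, map_mul, hab.eq]; simp
  by_cases hq : IsCyclic (P ⧸ N)
  · have hcomm : ∀ a b : P, a * b = b * a :=
      commutative_of_cyclic_center_quotient π (by rw [hπ, QuotientGroup.ker_mk']; exact hNc)
    obtain ⟨yb, hyb⟩ := hq
    obtain ⟨y, rfl⟩ := QuotientGroup.mk'_surjective N yb
    change ∀ x, x ∈ Subgroup.zpowers (π y) at hyb
    have hgen : N ≤ Subgroup.zpowers y → False := by
      intro hle
      apply hcyc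
      refine ⟨y, fun a => ?_⟩
      obtain ⟨k, hk⟩ := hyb (π a)
      have : (y ^ k)⁻¹ * a ∈ N := by
        rw [← hker, map_mul, map_inv, map_zpow, ← hk]; simp
      exact (Subgroup.mul_mem_cancel_left _ (inv_mem (zpow_mem (Subgroup.mem_zpowers y) k))).1 (hle this)
    obtain ⟨k, hk⟩ := (IsPGroup.iff_orderOf.1 (hP.to_quotient N)) (π y)
    have hmem : y ^ p ^ k ∈ N := by
      rw [← hker, map_pow, ← hk, pow_orderOf_eq_one]
    have h1 : y ^ p ^ k = 1 := by
      by_contra h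
      exact hgen (by rw [← hNgen _ hmem h]; simpa using pow_mem (Subgroup.mem_zpowers y) _)
    have hk0 : k ≠ 0 := by
      rintro rfl
      rw [pow_zero, orderOf_eq_one_iff] at hk
      apply hcyc
      refine ⟨z, fun a => ?_⟩
      change a ∈ N
      rw [← hker]
      have := hyb (π a)
      rw [hk] at this
      simpa using this
    obtain ⟨j, rfl⟩ := Nat.exists_eq_succ_of_ne_zero hk0
    refine ⟨z, y ^ p ^ j, hzc, hz, by rw [← pow_mul, ← pow_succ]; exact h1, ?_, fun g => ⟨1, one_mem _, by rw [mul_one]; exact hcomm _ _⟩⟩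
    rw [← hN, ← hker, map_pow, ← orderOf_dvd_iff_pow_eq_one, hk, Nat.pow_dvd_pow_iff_le_right hp.out.one_lt]
    omega
  · have hlt : Nat.card (P ⧸ N) < n := by
      have h1 := Subgroup.card_eq_card_quotient_mul_card_subgroup N
      rw [Nat.card_zpowers, hz, hn] at h1
      rw [h1]
      have : 0 < Nat.card (P ⧸ N) := Nat.card_pos
      have := hp.out.one_lt
      nlinarith
    obtain ⟨zb, eb, hzb, hzo, hebp, heb, hcom⟩ := ih _ hlt (P ⧸ N) rfl (hP.to_quotient N) hq
    obtain ⟨u, rfl⟩ := QuotientGroup.mk'_surjective N zb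
    obtain ⟨v, rfl⟩ := QuotientGroup.mk'_surjective N eb
    rw [← hπ] at hzb hzo hebp heb hcom
    have hcc : ∀ w ∈ Subgroup.zpowers (π u), ∀ g, Commute g w := by
      intro w hw g
      have : Subgroup.zpowers (π u) ≤ Subgroup.center _ := by simpa using hzb
      exact Subgroup.mem_center_iff.1 (this hw) g
    have huN : u ^ p ∈ N := by rw [← hker, map_pow, ← hzo, pow_orderOf_eq_one]
    have hvN : v ^ p ∈ N := by rw [← hker, map_pow, hebp]
    by_cases hup : u ^ p = 1
    · refine ⟨z, u, hzc, hz, hup, ?_, fun g => hu _ _ (hcc _ (Subgroup.mem_zpowers _) _)⟩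
      rw [← hN, ← hker, ← orderOf_eq_one_iff, hzo]
      exact hp.out.one_lt.ne'
    have hpow : ∀ a w, π w ∈ Subgroup.zpowers (π u) → (a * w) ^ p = a ^ p * w ^ p := by
      intro a w hw
      obtain ⟨c, hc, h⟩ := hu w a (hcc _ hw _).symm
      exact aux_powp (hcen c hc _) (hcen c hc _) h p hodd (hNp c hc)
    have hg := hNgen _ huN hup
    have huo : orderOf (u ^ p) = p := orderOf_eq_prime (hNp _ huN) hup
    have hvN' := hvN
    rw [← hg] at hvN'
    obtain ⟨m, hm⟩ := hvN'
    change (u ^ p) ^ m = v ^ p at hm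
    have hum : π (u ^ (-m)) ∈ Subgroup.zpowers (π u) := by
      rw [map_zpow]; exact zpow_mem (Subgroup.mem_zpowers _) _
    have hep : (v * u ^ (-m)) ^ p = 1 := by
      rw [hpow _ _ hum, ← hm, ← zpow_natCast (u ^ (-m)), ← zpow_natCast u p, ← zpow_mul, ← zpow_mul, ← zpow_add]
      ring_nf; simp
    refine ⟨z, v * u ^ (-m), hzc, hz, hep, ?_, fun g => ?_⟩
    · intro hh
      rw [← hN, ← hker, map_mul] at hh
      apply heb
      rw [eq_inv_of_mul_eq_one_left hh]
      exact inv_mem hum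
    · set e := v * u ^ (-m) with he
      refine ⟨(e * g)⁻¹ * (g * e), ?_, by group⟩
      set w := (e * g)⁻¹ * (g * e) with hw
      have hπw : π w ∈ Subgroup.zpowers (π u) := by
        obtain ⟨y, hy, hy2⟩ := hcom (π g)
        have : π w = y := by
          have he' : π e = π v * π (u ^ (-m)) := by rw [he, map_mul]
          rw [hw, map_mul π (e * g)⁻¹, map_inv, map_mul π e g, map_mul π g e, inv_mul_eq_iff_eq_mul, he', ← mul_assoc, hy2]
          calc π v * π g * y * π (u ^ (-m)) = π v * ((π g * y) * π (u ^ (-m))) := by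
                simp only [mul_assoc]
            _ = π v * (π (u ^ (-m)) * (π g * y)) := by rw [(hcc _ hum (π g * y)).eq]
            _ = _ := by simp only [mul_assoc]
        rw [this]; exact hy
      have hf : (g⁻¹ * e * g) * w = e := by rw [hw]; group
      have hfp : (g⁻¹ * e * g) ^ p = 1 := by
        have := conj_pow (a := g⁻¹) (b := e) (i := p)
        rw [inv_inv] at this
        rw [this, hep]; simp
      have hwp : w ^ p = 1 := by
        have := hpow (g⁻¹ * e * g) w hπw
        rw [hf, hep, hfp, one_mul] at this
        exact this.symm
      obtain ⟨k, hk⟩ := hπw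
      change (π u) ^ k = π w at hk
      have hwu : w ∈ Subgroup.zpowers u := by
        have : (u ^ k)⁻¹ * w ∈ N := by
          rw [← hker, map_mul, map_inv, map_zpow, ← hk]; simp
        have hle : N ≤ Subgroup.zpowers u := by
          rw [← hg]; simpa using pow_mem (Subgroup.mem_zpowers u) _
        exact (Subgroup.mul_mem_cancel_left _ (inv_mem (zpow_mem (Subgroup.mem_zpowers u) k))).1 (hle this)
      obtain ⟨a, ha⟩ := hwu
      change u ^ a = w at ha
      rw [← ha, ← zpow_natCast, ← zpow_mul, mul_comm, zpow_mul, zpow_natCast, ← orderOf_dvd_iff_zpow_eq_one, huo] at hwp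
      obtain ⟨b, rfl⟩ := hwp
      rw [← ha, zpow_mul, zpow_natCast]
      exact zpow_mem huN b

lemma aux_sup {G : Type*} [Group G] [Finite G] [Group.IsNilpotent G] (p : ℕ) [hp : Fact p.Prime]
    (P : Sylow p G) : (P : Subgroup G) ⊔ Subgroup.centralizer (P : Set G) = ⊤ := by
  rw [← Subgroup.index_eq_one]
  by_contra h
  obtain ⟨q, hq, hqd⟩ := Nat.exists_prime_and_dvd h
  have : Fact q.Prime := ⟨hq⟩
  obtain ⟨Q⟩ : Nonempty (Sylow q G) := inferInstance
  have hle : (Q : Subgroup G) ≤ (P : Subgroup G) ⊔ Subgroup.centralizer (P : Set G) := by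
    by_cases hpq : q = p
    · subst hpq
      have : Unique (Sylow q G) := Sylow.unique_of_normal P inferInstance
      rw [Subsingleton.elim Q P]
      exact le_sup_left
    · refine le_trans ?_ le_sup_right
      intro y hy
      rw [Subgroup.mem_centralizer_iff]
      intro x hx
      exact Subgroup.commute_of_normal_of_disjoint (P : Subgroup G) (Q : Subgroup G) inferInstance inferInstance
        (IsPGroup.disjoint_of_ne p q (Ne.symm hpq) _ _ P.2 Q.2) x y hx hy
  exact Q.not_dvd_index (hqd.trans (Subgroup.index_dvd_of_le hle))

lemma aux_nilp {G : Type*} [Group G] [Finite G] [Group.IsNilpotent G] (p : ℕ) [hp : Fact p.Prime] (hodd : Odd p)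
    (P : Sylow p G) (hc : ¬ IsCyclic (P : Subgroup G)) :
    ∃ z e : G, z ∈ Subgroup.center G ∧ orderOf z = p ∧ e ^ p = 1 ∧ e ∉ Subgroup.zpowers z ∧
      ∀ g : G, ∃ w ∈ Subgroup.zpowers z, e * g = g * e * w := by
  obtain ⟨z, e, hz, hzo, hep, hez, h⟩ := aux_pgroup p hodd _ (P : Subgroup G) rfl P.2 hc
  have hdec : ∀ g : G, ∃ a ∈ (P : Subgroup G), ∃ b ∈ Subgroup.centralizer (P : Set G), a * b = g := by
    intro g
    have : g ∈ (P : Subgroup G) ⊔ Subgroup.centralizer (P : Set G) := by rw [aux_sup]; trivial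
    exact Subgroup.mem_sup_of_normal_left.1 this
  have hzc : (z : G) ∈ Subgroup.center G := by
    rw [Subgroup.mem_center_iff]
    intro g
    obtain ⟨a, ha, b, hb, rfl⟩ := hdec g
    have h1 := congrArg Subtype.val (Subgroup.mem_center_iff.1 hz ⟨a, ha⟩)
    have h2 := Subgroup.mem_centralizer_iff.1 hb z z.2
    simp at h1
    rw [mul_assoc, ← h2, ← mul_assoc, h1, mul_assoc]
  refine ⟨z, e, hzc, by rw [Subgroup.orderOf_coe]; exact hzo, by exact_mod_cast congrArg Subtype.val hep, ?_, ?_⟩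
  · rintro ⟨k, hk⟩
    exact hez ⟨k, Subtype.ext (by simpa using hk)⟩
  · intro g
    obtain ⟨a, ha, b, hb, rfl⟩ := hdec g
    obtain ⟨w, ⟨k, hk⟩, hw⟩ := h ⟨a, ha⟩
    have hb2 := Subgroup.mem_centralizer_iff.1 hb e e.2
    have hwz : (w : G) ∈ Subgroup.zpowers (z : G) := ⟨k, by simpa using congrArg Subtype.val hk⟩
    have hwc : (w : G) ∈ Subgroup.center G := (show Subgroup.zpowers (z : G) ≤ _ by simpa using hzc) hwz
    refine ⟨(w : G)⁻¹, inv_mem hwz, ?_⟩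
    have h1 := congrArg Subtype.val hw
    simp at h1
    rw [eq_mul_inv_iff_mul_eq, mul_assoc a, ← hb2, ← mul_assoc a, h1, ← mul_assoc, mul_assoc,
      Subgroup.mem_center_iff.1 hwc b, ← mul_assoc]

theorem cd_ge_three {G' : Type*} [Group G'] [Finite G'] [Group.IsNilpotent G']
    (hodd : Odd (Nat.card G')) (hnt : Nat.card G' ≠ 1)
    (hsyl : ∀ p : ℕ, p.Prime → p ∣ Nat.card G' → ∀ P : Sylow p G', ¬ IsCyclic ↥(P : Subgroup G'))
    (n : ℕ) [NeZero n] (hcop : Nat.Coprime n (Nat.card G'))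
    (x : G' × Multiplicative (ZMod n)) (hx : x.1 ≠ 1) :
    3 ≤ Set.ncard {H : Subgroup (G' × Multiplicative (ZMod n)) |
      ∃ g : G' × Multiplicative (ZMod n), orderOf g = orderOf x ∧ H = Subgroup.zpowers g} := by
  have : Finite (Multiplicative (ZMod n)) := inferInstanceAs (Finite (ZMod n))
  obtain ⟨p, hp, hpd⟩ := Nat.exists_prime_and_dvd (mt orderOf_eq_one_iff.1 hx)
  have hpG : p ∣ Nat.card G' := hpd.trans (orderOf_dvd_natCard _)
  have hpo : Odd p := hodd.of_dvd_nat hpG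
  have : Fact p.Prime := ⟨hp⟩
  obtain ⟨P⟩ : Nonempty (Sylow p G') := inferInstance
  obtain ⟨z, e, hz, hzo, hep, hez, h⟩ := aux_nilp p hpo P (hsyl p hp hpG P)
  have hpx : p ∣ orderOf x := by
    rw [Prod.orderOf]; exact hpd.trans (Nat.dvd_lcm_left _ _)
  have hzp : z ^ p = 1 := by rw [← hzo, pow_orderOf_eq_one]
  by_cases hz1 : ((z, 1) : G' × Multiplicative (ZMod n)) ∈ Subgroup.zpowers x
  · by_cases he1 : ((e, 1) : G' × Multiplicative (ZMod n)) ∈ Subgroup.zpowers x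
    · exfalso
      have hz2 : z ∈ Subgroup.zpowers x.1 := by
        obtain ⟨k, hk⟩ := hz1; exact ⟨k, by simpa using congrArg Prod.fst hk⟩
      have he2 : e ∈ Subgroup.zpowers x.1 := by
        obtain ⟨k, hk⟩ := he1; exact ⟨k, by simpa using congrArg Prod.fst hk⟩
      classical
      have : Fintype (Subgroup.zpowers x.1) := Fintype.ofFinite _
      have hle := IsCyclic.card_pow_eq_one_le (α := Subgroup.zpowers x.1) hp.pos
      have hzz : Subgroup.zpowers z ≤ Subgroup.zpowers x.1 := by simpa using hz2
      have hsub : insert (⟨e, he2⟩ : Subgroup.zpowers x.1) (((Subgroup.zpowers z).subgroupOf (Subgroup.zpowers x.1) : Set (Subgroup.zpowers x.1)))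
          ⊆ ((Finset.univ.filter fun a : Subgroup.zpowers x.1 => a ^ p = 1 : Finset _) : Set _) := by
        rintro a (rfl | ha)
        · simp [Subtype.ext_iff, hep]
        · obtain ⟨k, hk⟩ := Subgroup.mem_subgroupOf.1 ha
          have : (a : G') ^ p = 1 := by
            rw [← hk]
            change (z ^ k) ^ p = 1
            rw [← zpow_natCast, ← zpow_mul, mul_comm, zpow_mul, zpow_natCast, hzp, one_zpow]
          simp [Subtype.ext_iff, this]
      have h1 := Set.ncard_le_ncard hsub (Set.toFinite _)
      rw [Set.ncard_insert_of_notMem (by simpa [Subgroup.mem_subgroupOf] using hez) (Set.toFinite _), Set.ncard_coe_finset] at h1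
      have h2 : Set.ncard (((Subgroup.zpowers z).subgroupOf (Subgroup.zpowers x.1) : Set (Subgroup.zpowers x.1))) = p := by
        rw [← hzo, ← Nat.card_zpowers]
        exact Nat.card_congr (Subgroup.subgroupOfEquivOfLe hzz).toEquiv
      omega
    · obtain ⟨w, hw, hw2⟩ := h x.1
      have hwc : w ∈ Subgroup.center G' := (show Subgroup.zpowers z ≤ _ by simpa using hz) hw
      have hwp : w ^ p = 1 := by
        obtain ⟨k, rfl⟩ := hw
        change (z ^ k) ^ p = 1
        rw [← zpow_natCast, ← zpow_mul, mul_comm, zpow_mul, zpow_natCast, hzp, one_zpow]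
      refine aux_three hp hpo (z := (w, 1)) hpx he1 (Prod.ext (by simpa using hep) (by simp))
        (Prod.ext (by simpa using hwp) (by simp)) (Prod.ext ?_ (by simp)) (Prod.ext ?_ (by simp)) (Prod.ext ?_ (by simp))
      · exact (Subgroup.mem_center_iff.1 hwc _).symm
      · exact (Subgroup.mem_center_iff.1 hwc _).symm
      · exact hw2
  · refine aux_three hp hpo (z := 1) hpx hz1 (Prod.ext (by simpa using hzp) (by simp))
        (one_pow _) (Commute.one_left _) (Commute.one_left _) (Prod.ext ?_ (by simp))
    simpa using (Subgroup.mem_center_iff.1 hz x.1).symm
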